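/- arXiv:1810.10849 — 2 statements merged into one kernel-verified Lean document; each statement's English description precedes it below -/
import Mathlib

section
/- Fix 0 < τ < T. There is a constant C₁ = C₁(d) > 0 with the following property: for every ε ∈ (0,1), every y₀ ∈ L²(ℝ^d) and every N ≥ C₁ √( (1/(T−τ)) (1 + ln(1/ε)) ), setting v_n := −⟨ e^{τΔ}y₀, f_{N,n} ⟩ for n ∈ ℤ^d (where e^{τΔ}y₀ is the heat solution at time τ with initial datum y₀), the family ( v_n · G_{T−τ}(· − n/N) )_{n∈ℤ^d} is summable in L²(ℝ^d), and the state y(T,·) := e^{TΔ}y₀ + Σ_{n∈ℤ^d} v_n G_{T−τ}(· − n/N) satisfies ‖y(T,·)‖ ≤ ε ‖y₀‖, where G_t(x) := (4πt)^{−d/2} e^{−|x|²/(4t)} is the heat kernel. -/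
open MeasureTheory Filter Topology Metric ENNReal NNReal

noncomputable section

/-- `sinc` with value 1 at 0. -/
def sinc' (x : ℝ) : ℝ := if x = 0 then 1 else Real.sin x / x

/-- The function `f_{N,n}(x) = ∏_j sin (π (N x_j - n_j)) / (π (N x_j - n_j))`. -/
def fN (d : ℕ) (N : ℝ) (n : Fin d → ℤ) (x : EuclideanSpace ℝ (Fin d)) : ℝ :=
  ∏ j, sinc' (Real.pi * (N * x j - n j))

/-- The lattice point `n / N` in `ℝ^d`. -/
def latticePt (d : ℕ) (N : ℝ) (n : Fin d → ℤ) : EuclideanSpace ℝ (Fin d) :=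
  WithLp.toLp 2 fun j => (n j : ℝ) / N

/-- The heat solution at time `t > 0` with initial datum `u₀ ∈ L²(ℝ^d)`:
`u(t,x) = (4πt)^{-d/2} ∫ e^{-|x-y|²/(4t)} u₀(y) dy`. -/
def heatSol (d : ℕ) (u₀ : EuclideanSpace ℝ (Fin d) → ℝ) (t : ℝ)
    (x : EuclideanSpace ℝ (Fin d)) : ℝ :=
  (4 * Real.pi * t) ^ (-(d : ℝ) / 2) * ∫ y, Real.exp (-‖x - y‖ ^ 2 / (4 * t)) * u₀ y

/-- The family `F` is summable in `L²(ℝ^d)` with sum `g`: the finite partial sums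
converge to `g` in the `L²` norm along the filter of finite subsets of `ℤ^d`. -/
def HasSumL2 (d : ℕ) {V : Type} [NormedAddCommGroup V]
    (F : (Fin d → ℤ) → EuclideanSpace ℝ (Fin d) → V)
    (g : EuclideanSpace ℝ (Fin d) → V) : Prop :=
  Tendsto (fun s : Finset (Fin d → ℤ) =>
    eLpNorm (fun x => g x - ∑ n ∈ s, F n x) 2 volume) atTop (𝓝 0)

/-- The closed cube `Q_r(0)` in `ℝ^d`, centered at the origin, of side length `2r`. -/
def Qcube (d : ℕ) (r : ℝ) : Set (EuclideanSpace ℝ (Fin d)) := {ξ | ∀ j, |ξ j| ≤ r}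

/-- The truncated Fourier integral, with the paper's normalization
`(2π)^{-d/2} ∫_{|x| ≤ R} e^{-i x·ξ} f(x) dx`. -/
def truncFT (d : ℕ) (f : EuclideanSpace ℝ (Fin d) → ℂ) (R : ℝ)
    (ξ : EuclideanSpace ℝ (Fin d)) : ℂ :=
  (((2 * Real.pi) ^ (-(d : ℝ) / 2) : ℝ) : ℂ) *
    ∫ x in closedBall (0 : EuclideanSpace ℝ (Fin d)) R,
      Complex.exp (-(Complex.I * ((inner ℝ x ξ : ℝ) : ℂ))) * f x

/-- `fhat` is the Fourier transform of `f ∈ L²(ℝ^d)` in the `L²` (Plancherel) sense: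
`fhat ∈ L²` and the Fourier integrals of the truncations of `f` converge to `fhat`
in the `L²` norm. -/
def IsL2Fourier (d : ℕ) (f fhat : EuclideanSpace ℝ (Fin d) → ℂ) : Prop :=
  MemLp fhat 2 volume ∧
    Tendsto (fun R : ℝ => eLpNorm (fun ξ => fhat ξ - truncFT d f R ξ) 2 volume)
      atTop (𝓝 0)

/-- The `L²(ℝ^d)` norm of a function, as a real number. -/
def l2norm (d : ℕ) {V : Type} [NormedAddCommGroup V]
    (f : EuclideanSpace ℝ (Fin d) → V) : ℝ :=
  (eLpNorm f 2 volume).toReal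

/-- The heat kernel `G_t(x) = (4πt)^{-d/2} e^{-|x|²/(4t)}`. -/
def heatKer (d : ℕ) (t : ℝ) (x : EuclideanSpace ℝ (Fin d)) : ℝ :=
  (4 * Real.pi * t) ^ (-(d : ℝ) / 2) * Real.exp (-‖x‖ ^ 2 / (4 * t))


open FourierTransform

abbrev EE (d : ℕ) := EuclideanSpace ℝ (Fin d)

theorem fourier_toLp_ae {d : ℕ} {φ : EE d → ℂ} (h1 : Integrable φ) (h2 : MemLp φ 2 volume) :
    ⇑(𝓕 (h2.toLp φ) : Lp ℂ 2 (volume : Measure (EE d))) =ᵐ[volume] 𝓕 φ := by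
  have hcont : Continuous (𝓕 φ) := by
    exact VectorFourier.fourierIntegral_continuous Real.continuous_fourierChar
      (by exact continuous_inner) h1
  apply ae_eq_of_integral_contDiff_smul_eq
  · exact (Lp.memLp _).locallyIntegrable (by norm_num)
  · exact hcont.locallyIntegrable
  · intro g g_smooth g_cpt
    have hg₁ : HasCompactSupport (Complex.ofRealCLM ∘ g) := g_cpt.comp_left rfl
    have hg₂ : ContDiff ℝ (↑(⊤ : ℕ∞)) (Complex.ofRealCLM ∘ g) := by fun_prop
    set G := hg₁.toSchwartzMap hg₂ with hG
    have e1 := congrArg (fun D => D G)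
      (Lp.fourier_toTemperedDistribution_eq (h2.toLp φ))
    simp only [TemperedDistribution.fourier_apply, Lp.toTemperedDistribution_apply] at e1
    have e2 : ∫ x, (𝓕 G) x • (h2.toLp φ) x = ∫ x, (𝓕 (G : EE d → ℂ)) x • φ x := by
      apply integral_congr_ae
      filter_upwards [h2.coeFn_toLp] with x hx
      rw [hx]; rfl
    have e3 : ∫ x, (𝓕 (G : EE d → ℂ)) x • φ x = ∫ x, G x • 𝓕 φ x := by
      have := VectorFourier.integral_fourierIntegral_smul_eq_flip (μ := (volume : Measure (EE d)))
        (ν := (volume : Measure (EE d))) (L := innerₗ (EE d)) (f := G) (g := φ)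
        Real.continuous_fourierChar (by exact continuous_inner) G.integrable h1
      rw [flip_innerₗ] at this
      exact this
    have e4 : ∀ x, G x = (g x : ℂ) := fun x => rfl
    rw [e2, e3] at e1
    simp only [e4] at e1
    simpa using e1.symm

/-- Gaussian multiplier. -/
def mm {d : ℕ} (t : ℝ) (ξ : EE d) : ℝ := Real.exp (-(4 * Real.pi ^ 2 * t) * ‖ξ‖ ^ 2)

/-- Character. -/
def ech {d : ℕ} (a ξ : EE d) : ℂ := Complex.exp (2 * Real.pi * Complex.I * (inner ℝ a ξ : ℝ))

theorem norm_ech {d : ℕ} (a ξ : EE d) : ‖ech a ξ‖ = 1 := by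
  unfold ech
  rw [show 2 * Real.pi * Complex.I * ((inner ℝ a ξ : ℝ) : ℂ)
    = ((2 * Real.pi * inner ℝ a ξ : ℝ) : ℂ) * Complex.I by push_cast; ring]
  exact Complex.norm_exp_ofReal_mul_I _

theorem continuous_ech {d : ℕ} (a : EE d) : Continuous (ech a) := by
  unfold ech; fun_prop

theorem continuous_mm {d : ℕ} (t : ℝ) : Continuous (mm t : EE d → ℝ) := by
  unfold mm; fun_prop

theorem mm_pos {d : ℕ} (t : ℝ) (ξ : EE d) : 0 < mm t ξ := Real.exp_pos _

theorem mm_le_one {d : ℕ} {t : ℝ} (ht : 0 ≤ t) (ξ : EE d) : mm t ξ ≤ 1 := by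
  unfold mm
  rw [Real.exp_le_one_iff]
  have : 0 ≤ 4 * Real.pi ^ 2 * t * ‖ξ‖ ^ 2 := by positivity
  linarith

theorem integrable_mm {d : ℕ} {t : ℝ} (ht : 0 < t) : Integrable (mm t : EE d → ℝ) := by
  have hb : (0:ℝ) < (((4 * Real.pi ^ 2 * t : ℝ)) : ℂ).re := by
    rw [Complex.ofReal_re]; positivity
  have := GaussianFourier.integrable_cexp_neg_mul_sq_norm_add hb 0 (0 : EE d)
  refine this.norm.congr (.of_forall fun x => ?_)
  simp only [mm, Complex.norm_exp]
  congr 1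
  rw [← Complex.ofReal_neg, ← Complex.ofReal_pow, ← Complex.ofReal_mul, zero_mul, add_zero,
    Complex.ofReal_re]

theorem mm_sq {d : ℕ} (t : ℝ) (ξ : EE d) : mm t ξ ^ 2 = mm (2 * t) ξ := by
  unfold mm
  rw [← Real.exp_nat_mul]; congr 1; push_cast; ring

theorem mm_add {d : ℕ} (s t : ℝ) (ξ : EE d) : mm (s + t) ξ = mm s ξ * mm t ξ := by
  unfold mm
  rw [← Real.exp_add]; congr 1; ring

theorem memLp_mm {d : ℕ} {t : ℝ} (ht : 0 < t) : MemLp (mm t : EE d → ℝ) 2 volume := by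
  rw [memLp_two_iff_integrable_sq (continuous_mm t).aestronglyMeasurable]
  simp_rw [mm_sq]
  exact integrable_mm (by positivity)

/-- frequency-side shifted Gaussian -/
def aF {d : ℕ} (t : ℝ) (a ξ : EE d) : ℂ := (mm t ξ : ℂ) * ech a ξ

theorem continuous_aF {d : ℕ} (t : ℝ) (a : EE d) : Continuous (aF t a) := by
  unfold aF
  exact (Complex.continuous_ofReal.comp (continuous_mm t)).mul (continuous_ech a)

theorem norm_aF {d : ℕ} (t : ℝ) (a ξ : EE d) : ‖aF t a ξ‖ = ‖mm t ξ‖ := by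
  simp [aF, norm_ech]

theorem memLp_aF {d : ℕ} {t : ℝ} (ht : 0 < t) (a : EE d) : MemLp (aF t a) 2 volume :=
  (memLp_mm ht).of_le (continuous_aF t a).aestronglyMeasurable
    (.of_forall fun ξ => (norm_aF t a ξ).le)

theorem integrable_aF {d : ℕ} {t : ℝ} (ht : 0 < t) (a : EE d) : Integrable (aF t a) :=
  (integrable_mm ht).mono (continuous_aF t a).aestronglyMeasurable
    (.of_forall fun ξ => (norm_aF t a ξ).le)

theorem fourier_aF {d : ℕ} {t : ℝ} (ht : 0 < t) (a x : EE d) :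
    𝓕 (aF t a) x = (heatKer d t (x - a) : ℂ) := by
  have hb : (0:ℝ) < (((4 * Real.pi ^ 2 * t : ℝ)) : ℂ).re := by
    rw [Complex.ofReal_re]; positivity
  have h := fourier_gaussian_innerProductSpace' hb a x
  have e : aF t a = (fun v ↦ Complex.exp (-((4 * Real.pi ^ 2 * t : ℝ) : ℂ) * ‖v‖ ^ 2
      + 2 * Real.pi * Complex.I * (inner ℝ a v : ℝ))) := by
    ext ξ
    rw [Complex.exp_add, aF, mm, ech]
    push_cast
    rfl
  rw [e, h, heatKer, finrank_euclideanSpace_fin]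
  have hpi := Real.pi_pos
  push_cast
  congr 1
  · rw [show (Real.pi : ℂ) / (4 * (Real.pi : ℂ) ^ 2 * (t : ℂ)) =
      ((Real.pi / (4 * Real.pi ^ 2 * t) : ℝ) : ℂ) by push_cast; rfl,
      show (d : ℂ) / 2 = (((d : ℝ) / 2 : ℝ) : ℂ) by push_cast; rfl,
      ← Complex.ofReal_cpow (by positivity)]
    congr 1
    rw [neg_div, Real.rpow_neg (by positivity), ← Real.inv_rpow (by positivity)]
    congr 1
    field_simp
  · congr 1
    rw [norm_sub_rev]
    have : (Real.pi : ℂ) ≠ 0 := by exact_mod_cast hpi.ne'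
    have ht' : (t : ℂ) ≠ 0 := by exact_mod_cast ht.ne'
    field_simp

/-- complexified datum -/
theorem memLp_ofReal {d : ℕ} {y : EE d → ℝ} (hy : MemLp y 2 volume) :
    MemLp (fun x => (y x : ℂ)) 2 volume := hy.ofReal

theorem heatSol_eq {d : ℕ} {y : EE d → ℝ} (hy : MemLp y 2 volume) {t : ℝ} (ht : 0 < t)
    (x : EE d) :
    (heatSol d y t x : ℂ) =
      𝓕 (fun ξ => (mm t ξ : ℂ) * (𝓕⁻ ((memLp_ofReal hy).toLp) : Lp ℂ 2 volume) ξ) x := by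
  set Y := (memLp_ofReal hy).toLp with hY
  have h1 : inner ℂ ((memLp_aF ht x).toLp) (𝓕⁻ Y : Lp ℂ 2 volume) =
      inner ℂ (𝓕 ((memLp_aF ht x).toLp) : Lp ℂ 2 volume) Y := by
    conv_rhs => rw [← fourier_fourierInv_eq (F := Lp ℂ 2 (volume : Measure (EE d))) Y]
    rw [Lp.inner_fourier_eq]
  rw [L2.inner_def, L2.inner_def] at h1
  have e1 : ∫ a, inner ℂ (((memLp_aF ht x).toLp) a) ((𝓕⁻ Y : Lp ℂ 2 volume) a) =
      𝓕 (fun ξ => (mm t ξ : ℂ) * (𝓕⁻ Y : Lp ℂ 2 volume) ξ) x := by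
    rw [Real.fourier_eq']
    apply integral_congr_ae
    filter_upwards [(memLp_aF ht x).coeFn_toLp] with ξ hξ
    rw [hξ, RCLike.inner_apply, aF, ech, smul_eq_mul, map_mul, ← Complex.exp_conj]
    simp only [map_mul, Complex.conj_ofReal, Complex.conj_I, map_ofNat]
    rw [real_inner_comm]
    push_cast
    rw [show 2 * (Real.pi : ℂ) * -Complex.I * ((inner ℝ ξ x : ℝ) : ℂ)
      = -2 * Real.pi * ((inner ℝ ξ x : ℝ) : ℂ) * Complex.I by ring]
    ring
  have e2 : ∫ a, inner ℂ ((𝓕 ((memLp_aF ht x).toLp) : Lp ℂ 2 volume) a) (Y a) =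
      (heatSol d y t x : ℂ) := by
    unfold heatSol
    rw [← integral_const_mul, ← integral_complex_ofReal]
    apply integral_congr_ae
    filter_upwards [fourier_toLp_ae (integrable_aF ht x) (memLp_aF ht x),
      (memLp_ofReal hy).coeFn_toLp] with z hz1 hz2
    rw [hz1, hz2, fourier_aF ht, RCLike.inner_apply, Complex.conj_ofReal, heatKer, norm_sub_rev]
    push_cast
    ring
  rw [← e1, ← e2, h1]

theorem memLp_mul_mm {d : ℕ} {t : ℝ} (ht : 0 ≤ t) {u : EE d → ℂ} (hu : MemLp u 2 volume) :
    MemLp (fun ξ => (mm t ξ : ℂ) * u ξ) 2 volume :=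
  hu.of_le (((Complex.continuous_ofReal.comp (continuous_mm t)).aestronglyMeasurable).mul hu.1)
    (.of_forall fun ξ => by
      rw [norm_mul, Complex.norm_real, Real.norm_of_nonneg (mm_pos t ξ).le]
      exact mul_le_of_le_one_left (norm_nonneg _) (mm_le_one ht ξ))

theorem integrable_mul_mm {d : ℕ} {t : ℝ} (ht : 0 < t) {u : EE d → ℂ} (hu : MemLp u 2 volume) :
    Integrable (fun ξ => (mm t ξ : ℂ) * u ξ) := by
  have := (memLp_mm (d := d) ht).ofReal (K := ℂ)
  exact this.integrable_mul hu

theorem heatSol_ae {d : ℕ} {y : EE d → ℝ} (hy : MemLp y 2 volume) {t : ℝ} (ht : 0 < t) :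
    ⇑(𝓕 ((memLp_mul_mm ht.le (Lp.memLp (𝓕⁻ ((memLp_ofReal hy).toLp) :
        Lp ℂ 2 (volume : Measure (EE d))))).toLp) : Lp ℂ 2 (volume : Measure (EE d)))
      =ᵐ[volume] fun x => (heatSol d y t x : ℂ) := by
  filter_upwards [fourier_toLp_ae (integrable_mul_mm ht (Lp.memLp (𝓕⁻ ((memLp_ofReal hy).toLp) :
        Lp ℂ 2 (volume : Measure (EE d))))) (memLp_mul_mm ht.le (Lp.memLp _))] with x hx
  rw [hx, heatSol_eq hy ht]

attribute [local instance] instMeasureSpaceUnitAddCircle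

/-- projection to the torus -/
def tor {d : ℕ} (N : ℝ) (ξ : EE d) : UnitAddTorus (Fin d) := fun j => ((ξ j / N : ℝ) : UnitAddCircle)

/-- fundamental cube -/
def QQ (d : ℕ) (N : ℝ) : Set (EE d) := {ξ | ∀ j, ξ j / N ∈ Set.Ioc (-1/2 : ℝ) (-1/2 + 1)}

theorem measurableSet_QQ (d : ℕ) (N : ℝ) : MeasurableSet (QQ d N) := by
  have : QQ d N = ⋂ j, (fun ξ : EE d => ξ j / N) ⁻¹' Set.Ioc (-1/2 : ℝ) (-1/2 + 1) := by
    ext ξ; simp [QQ]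
  rw [this]
  refine MeasurableSet.iInter fun j => ?_
  exact measurableSet_Ioc.preimage (by fun_prop)

theorem measurable_tor {d : ℕ} (N : ℝ) : Measurable (tor N : EE d → UnitAddTorus (Fin d)) := by
  unfold tor
  refine measurable_pi_lambda _ fun j => ?_
  exact AddCircle.measurable_mk'.comp (by fun_prop)

theorem lintegral_tor {d : ℕ} {N : ℝ} (hN : 0 < N) {f : UnitAddTorus (Fin d) → ℝ≥0∞}
    (hf : Measurable f) :
    ∫⁻ ξ in QQ d N, f (tor N ξ) = ENNReal.ofReal (N ^ d) * ∫⁻ θ, f θ := by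
  rw [UnitAddTorus.lintegral_preimage f (fun _ => -1/2)]
  set S : Set (Fin d → ℝ) := {x | ∀ i, x i ∈ Set.Ioc (-1/2 : ℝ) (-1/2 + 1)} with hS
  have hSm : MeasurableSet S := by
    have : S = Set.pi Set.univ fun _ => Set.Ioc (-1/2 : ℝ) (-1/2 + 1) := by ext; simp [hS]
    rw [this]; exact MeasurableSet.univ_pi fun _ => measurableSet_Ioc
  have hF : Measurable (fun x : Fin d → ℝ => f (fun i => (x i : UnitAddCircle))) :=
    hf.comp (measurable_pi_lambda _ fun j =>
      AddCircle.measurable_mk'.comp (measurable_pi_apply j))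
  have e1 := Measure.map_addHaar_smul (volume : Measure (Fin d → ℝ)) (r := N⁻¹) (by positivity)
  have e2 : ∫⁻ x in S, f (fun i => (x i : UnitAddCircle)) ∂(Measure.map (fun x => N⁻¹ • x)
      (volume : Measure (Fin d → ℝ))) =
      ∫⁻ x in (fun x => N⁻¹ • x) ⁻¹' S, f (fun i => (((N⁻¹ • x) i : ℝ) : UnitAddCircle)) :=
    setLIntegral_map hSm hF (by fun_prop)
  rw [e1, Measure.restrict_smul, lintegral_smul_measure] at e2
  rw [Module.finrank_fin_fun, inv_pow, inv_inv, abs_of_pos (by positivity), smul_eq_mul] at e2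
  rw [e2]
  have hp := PiLp.volume_preserving_ofLp (Fin d)
  have e3 := hp.setLIntegral_comp_preimage_emb
    (MeasurableEquiv.toLp 2 (Fin d → ℝ)).symm.measurableEmbedding
    (fun x => f (fun i => (((N⁻¹ • x) i : ℝ) : UnitAddCircle))) ((fun x => N⁻¹ • x) ⁻¹' S)
  rw [← e3]
  have hQ : QQ d N = (@WithLp.ofLp 2 (Fin d → ℝ)) ⁻¹' ((fun x => N⁻¹ • x) ⁻¹' S) := by
    ext ξ; simp [QQ, hS, div_eq_inv_mul]
  rw [hQ]
  refine lintegral_congr fun ξ => ?_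
  congr 1
  ext j
  simp [tor, div_eq_inv_mul]

theorem map_tor {d : ℕ} {N : ℝ} (hN : 0 < N) :
    Measure.map (tor N) (volume.restrict (QQ d N)) =
      ENNReal.ofReal (N ^ d) • (volume : Measure (UnitAddTorus (Fin d))) := by
  refine Measure.ext_of_lintegral _ fun f hf => ?_
  rw [lintegral_map hf (measurable_tor N), lintegral_tor hN hf, lintegral_smul_measure, smul_eq_mul]

/-- lattice vector `N k` -/
def latN {d : ℕ} (N : ℝ) (k : Fin d → ℤ) : EE d := WithLp.toLp 2 fun j => N * (k j : ℝ)

theorem tor_add_latN {d : ℕ} {N : ℝ} (hN : 0 < N) (k : Fin d → ℤ) (ξ : EE d) :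
    tor N (ξ + latN N k) = tor N ξ := by
  ext j
  simp only [tor, latN, PiLp.add_apply]
  rw [add_div, mul_div_cancel_left₀ _ hN.ne', AddCircle.coe_add]
  have : ((k j : ℝ) : UnitAddCircle) = 0 := by
    rw [AddCircle.coe_eq_zero_iff]
    exact ⟨k j, by simp⟩
  rw [this, add_zero]

theorem mFourier_tor {d : ℕ} (N : ℝ) (n : Fin d → ℤ) (ξ : EE d) :
    UnitAddTorus.mFourier n (tor N ξ) = ech (latticePt d N n) ξ := by
  simp only [UnitAddTorus.mFourier, ContinuousMap.coe_mk, tor, fourier_coe_apply]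
  rw [← Complex.exp_sum, ech]
  congr 1
  simp only [PiLp.inner_apply, latticePt]
  push_cast
  rw [Finset.mul_sum]
  refine Finset.sum_congr rfl fun j _ => ?_
  simp
  ring

theorem shift_apply {d : ℕ} {N : ℝ} (hN : 0 < N) (k : Fin d → ℤ) (ξ : EE d) (j : Fin d) :
    (ξ - latN N k) j / N = ξ j / N - (k j : ℝ) := by
  have : (ξ - latN N k) j = ξ j - N * (k j : ℝ) := rfl
  rw [this, _root_.sub_div, mul_div_cancel_left₀ _ hN.ne']

theorem exists_shift {d : ℕ} {N : ℝ} (hN : 0 < N) (ξ : EE d) :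
    ∃ k : Fin d → ℤ, ξ - latN N k ∈ QQ d N := by
  refine ⟨fun j => ⌈ξ j / N - 1/2⌉, fun j => ?_⟩
  rw [shift_apply hN]
  have h1 := Int.le_ceil (ξ j / N - 1/2)
  have h2 := Int.ceil_lt_add_one (ξ j / N - 1/2)
  constructor <;> linarith

theorem mm_le_of_shift {d : ℕ} {N : ℝ} (hN : 0 < N) {s : ℝ} (hs : 0 < s) {k : Fin d → ℤ} {ξ : EE d}
    (h : ξ - latN N k ∈ QQ d N) : mm s ξ ≤ Real.exp (-(Real.pi ^ 2 * s * N ^ 2) * ‖k‖ ^ 2) := by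
  have key : ∀ j, N * |(k j : ℝ)| ≤ 2 * |ξ j| := by
    intro j
    have hj := h j
    rw [shift_apply hN] at hj
    obtain ⟨h1, h2⟩ := hj
    by_cases hk : k j = 0
    · simp [hk]
    have hk1 : (1 : ℝ) ≤ |(k j : ℝ)| := by
      rw [← Int.cast_abs]; exact_mod_cast Int.one_le_abs hk
    have : |(k j : ℝ)| ≤ 2 * |ξ j / N| := by
      rcases abs_cases (k j : ℝ) with ⟨a, _⟩ | ⟨a, _⟩ <;>
      rcases abs_cases (ξ j / N) with ⟨b, _⟩ | ⟨b, _⟩ <;> linarith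
    rw [abs_div, abs_of_pos hN, ← mul_div_assoc, le_div_iff₀ hN] at this
    linarith
  have key2 : N * ‖k‖ ≤ 2 * ‖ξ‖ := by
    have : ‖k‖ ≤ 2 * ‖ξ‖ / N := by
      rw [pi_norm_le_iff_of_nonneg (by positivity)]
      intro j
      rw [le_div_iff₀ hN, mul_comm, Int.norm_eq_abs]
      have := PiLp.norm_apply_le ξ j
      rw [Real.norm_eq_abs] at this
      linarith [key j]
    rw [le_div_iff₀ hN] at this
    linarith
  unfold mm
  apply Real.exp_le_exp.mpr
  have h2 : (N * ‖k‖) ^ 2 ≤ (2 * ‖ξ‖) ^ 2 := by gcongr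
  have h3 : 0 ≤ Real.pi ^ 2 * s := by positivity
  nlinarith [mul_le_mul_of_nonneg_left h2 h3]

theorem lintegral_compl_le {d : ℕ} {N : ℝ} (hN : 0 < N) {s : ℝ} (hs : 0 < s)
    {f : UnitAddTorus (Fin d) → ℝ≥0∞} (hf : Measurable f) :
    ∫⁻ ξ in (QQ d N)ᶜ, ENNReal.ofReal (mm s ξ) * f (tor N ξ) ≤
      (∑' k : {k : Fin d → ℤ // k ≠ 0},
        ENNReal.ofReal (Real.exp (-(Real.pi ^ 2 * s * N ^ 2) * ‖k.1‖ ^ 2))) *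
        (ENNReal.ofReal (N ^ d) * ∫⁻ θ, f θ) := by
  have hcov : (QQ d N)ᶜ ⊆ ⋃ k : {k : Fin d → ℤ // k ≠ 0}, (fun ξ => ξ - latN N k.1) ⁻¹' QQ d N := by
    intro ξ hξ
    obtain ⟨k, hk⟩ := exists_shift hN ξ
    refine Set.mem_iUnion.mpr ⟨⟨k, ?_⟩, hk⟩
    rintro rfl
    apply hξ
    have : latN N (0 : Fin d → ℤ) = 0 := by ext j; simp [latN]
    simpa [this] using hk
  refine (lintegral_mono_set hcov).trans ((lintegral_iUnion_le _ _).trans ?_)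
  rw [← ENNReal.tsum_mul_right]
  refine ENNReal.tsum_le_tsum fun k => ?_
  have hm : MeasurableSet ((fun ξ => ξ - latN N k.1) ⁻¹' QQ d N) :=
    (measurableSet_QQ d N).preimage (by fun_prop)
  calc _ ≤ ∫⁻ ξ in (fun ξ => ξ - latN N k.1) ⁻¹' QQ d N,
        ENNReal.ofReal (Real.exp (-(Real.pi ^ 2 * s * N ^ 2) * ‖k.1‖ ^ 2)) * f (tor N ξ) := by
        refine setLIntegral_mono' hm fun ξ hξ => ?_
        gcongr
        exact mm_le_of_shift hN hs hξ
    _ = _ := by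
        rw [lintegral_const_mul _ (show Measurable fun ξ => f (tor N ξ) from
          hf.comp (measurable_tor N))]
        congr 1
        rw [← lintegral_tor hN hf]
        have := (measurePreserving_sub_right (volume : Measure (EE d)) (latN N k.1)
          ).setLIntegral_comp_preimage_emb (MeasurableEquiv.subRight (latN N k.1)).measurableEmbedding
          (fun ξ => f (tor N ξ)) (QQ d N)
        rw [← this]
        refine lintegral_congr fun ξ => ?_
        rw [← tor_add_latN hN k.1 (ξ - latN N k.1), sub_add_cancel]

theorem mm_le_compl {d : ℕ} {N : ℝ} (hN : 0 < N) {s : ℝ} (hs : 0 < s) {ξ : EE d}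
    (h : ξ ∉ QQ d N) : mm s ξ ≤ Real.exp (-(Real.pi ^ 2 * s * N ^ 2)) := by
  obtain ⟨k, hk⟩ := exists_shift hN ξ
  have hk0 : k ≠ 0 := by
    rintro rfl
    apply h
    have : latN N (0 : Fin d → ℤ) = 0 := by ext j; simp [latN]
    simpa [this] using hk
  refine (mm_le_of_shift hN hs hk).trans (Real.exp_le_exp.mpr ?_)
  have h1 : 1 ≤ ‖k‖ := by
    obtain ⟨j, hj⟩ := Function.ne_iff.mp hk0
    refine le_trans ?_ (norm_le_pi_norm k j)
    rw [Int.norm_eq_abs, ← Int.cast_abs]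
    exact_mod_cast Int.one_le_abs hj
  have h2 : 1 ≤ ‖k‖ ^ 2 := one_le_pow₀ h1
  have h3 : 0 ≤ Real.pi ^ 2 * s * N ^ 2 := by positivity
  nlinarith

theorem summable_pi {a : ℤ → ℝ} (ha : Summable a) (h0 : 0 ≤ a) (d : ℕ) :
    Summable (fun k : Fin d → ℤ => ∏ j, a (k j)) := by
  induction d with
  | zero => exact Summable.of_finite
  | succ d ih =>
    rw [← (Fin.consEquiv (fun _ : Fin (d+1) => ℤ)).summable_iff]
    have := ha.mul_of_nonneg ih h0 (fun k => Finset.prod_nonneg fun j _ => h0 _)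
    refine this.congr fun p => ?_
    simp [Fin.prod_univ_succ, Fin.consEquiv]

theorem summable_exp_norm (d : ℕ) :
    Summable (fun k : Fin d → ℤ => Real.exp (-‖k‖ ^ 2)) := by
  rcases Nat.eq_zero_or_pos d with rfl | hd
  · exact Summable.of_finite
  have hd' : (0:ℝ) < d := by exact_mod_cast hd
  have ha : Summable (fun n : ℤ => Real.exp (-(n:ℝ)^2 / d)) := by
    have h := Real.summable_exp_nat_mul_iff (a := -(1/(d:ℝ))) |>.mpr (by
      rw [neg_lt_zero]; positivity)
    have hn : Summable (fun n : ℕ => Real.exp (-(n:ℝ)^2 / d)) := by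
      refine Summable.of_nonneg_of_le (fun _ => (Real.exp_pos _).le) (fun n => ?_) h
      apply Real.exp_le_exp.mpr
      have : (n:ℝ) ≤ (n:ℝ)^2 := by exact_mod_cast Nat.le_self_pow two_ne_zero n
      rw [neg_div, mul_neg, neg_le_neg_iff, mul_one_div]
      gcongr
    refine Summable.of_nat_of_neg (by simpa using hn) (by simpa using hn)
  refine Summable.of_nonneg_of_le (fun _ => (Real.exp_pos _).le) (fun k => ?_)
    (summable_pi ha (fun _ => (Real.exp_pos _).le) d)
  rw [← Real.exp_sum]
  apply Real.exp_le_exp.mpr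
  have : ∑ j, ((k j : ℝ)^2 / d) ≤ ∑ j : Fin d, ‖k‖^2 / d := by
    refine Finset.sum_le_sum fun j _ => ?_
    rw [← sq_abs]
    gcongr
    have := norm_le_pi_norm k j
    rwa [Int.norm_eq_abs] at this
  rw [Finset.sum_const, Finset.card_univ, Fintype.card_fin, nsmul_eq_mul,
    mul_div_cancel₀ _ hd'.ne'] at this
  simp_rw [neg_div, Finset.sum_neg_distrib]
  linarith

/-- frequency side of `fN` -/
def bF {d : ℕ} (N : ℝ) (n : Fin d → ℤ) : EE d → ℂ :=
  (QQ d N).indicator fun ξ => ((N ^ d)⁻¹ : ℂ) * ech (latticePt d N n) ξ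

theorem volume_QQ_lt {d : ℕ} {N : ℝ} (hN : 0 < N) : volume (QQ d N) < ∞ := by
  refine Bornology.IsBounded.measure_lt_top ?_
  refine (Metric.isBounded_iff_subset_closedBall (0 : EE d)).mpr ⟨d * N, fun ξ hξ => ?_⟩
  rw [mem_closedBall_zero_iff]
  have h1 : ∀ j, ‖ξ j‖ ≤ N := by
    intro j
    obtain ⟨a, b⟩ := hξ j
    rw [lt_div_iff₀ hN] at a
    rw [div_le_iff₀ hN] at b
    rw [Real.norm_eq_abs, abs_le]
    constructor <;> linarith
  have h2 : ‖ξ‖ ≤ ∑ j, ‖ξ j‖ := by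
    rw [EuclideanSpace.norm_eq]
    refine Real.sqrt_le_iff.mpr ⟨by positivity, ?_⟩
    exact Finset.sum_sq_le_sq_sum_of_nonneg fun j _ => norm_nonneg _
  refine h2.trans ((Finset.sum_le_sum fun j _ => h1 j).trans ?_)
  simp

theorem memLp_bF {d : ℕ} {N : ℝ} (hN : 0 < N) (n : Fin d → ℤ) (p : ℝ≥0∞) :
    MemLp (bF N n : EE d → ℂ) p volume := by
  unfold bF
  rw [memLp_indicator_iff_restrict (measurableSet_QQ d N)]
  have : IsFiniteMeasure (volume.restrict (QQ d N)) := ⟨by simpa using volume_QQ_lt hN⟩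
  refine MemLp.of_bound (C := ‖((N ^ d)⁻¹ : ℂ)‖)
    (continuous_const.mul (continuous_ech _)).aestronglyMeasurable (.of_forall fun ξ => ?_)
  rw [norm_mul, norm_ech, mul_one]

theorem sinc_integral {N : ℝ} (hN : 0 < N) (n : ℤ) (x : ℝ) :
    ∫ s : ℝ, (Set.Ioc (-(N/2)) (N/2)).indicator
      (fun s => (N:ℂ)⁻¹ * Complex.exp ((2 * Real.pi * Complex.I * (n / N - x)) * s)) s =
      (sinc' (Real.pi * (N * x - n)) : ℂ) := by
  have hNC : (N : ℂ) ≠ 0 := by exact_mod_cast hN.ne'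
  have hpi : (Real.pi : ℂ) ≠ 0 := by exact_mod_cast Real.pi_ne_zero
  rw [integral_indicator measurableSet_Ioc, ← intervalIntegral.integral_of_le (by linarith),
    intervalIntegral.integral_const_mul]
  set θ := Real.pi * (N * x - n) with hθ
  by_cases h : θ = 0
  · have h0 : N * x - n = 0 := by
      rcases mul_eq_zero.mp h with h | h
      · exact absurd h Real.pi_ne_zero
      · exact h
    have h1 : (n / N - x : ℂ) = 0 := by
      have : (N * x - n : ℂ) = 0 := by exact_mod_cast h0
      field_simp
      linear_combination -this
    rw [h1, sinc', if_pos h]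
    simp [hNC]
  · have hθC : (θ : ℂ) ≠ 0 := by exact_mod_cast h
    have hc : (2 * Real.pi * Complex.I * (n / N - x) : ℂ) = -(2 * Complex.I * θ / N) := by
      rw [hθ]; push_cast; field_simp; ring
    have hc0 : (2 * Real.pi * Complex.I * (n / N - x) : ℂ) ≠ 0 := by
      rw [hc, neg_ne_zero]
      exact div_ne_zero (mul_ne_zero (mul_ne_zero two_ne_zero Complex.I_ne_zero) hθC) hNC
    rw [integral_exp_mul_complex hc0, hc, sinc', if_neg h]
    push_cast
    rw [show -(2 * Complex.I * θ / N) * ((N : ℂ)/2) = -θ * Complex.I by field_simp,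
      show -(2 * Complex.I * θ / N) * (-((N : ℂ)/2)) = θ * Complex.I by field_simp]
    rw [Complex.sin]
    field_simp
    rw [Complex.I_sq]
    ring

theorem fourier_bF {d : ℕ} {N : ℝ} (hN : 0 < N) (n : Fin d → ℤ) (x : EE d) :
    𝓕 (bF N n) x = (fN d N n x : ℂ) := by
  have hNC : (N : ℂ) ≠ 0 := by exact_mod_cast hN.ne'
  rw [Real.fourier_eq', fN]
  push_cast
  simp_rw [← sinc_integral hN]
  rw [← integral_fintype_prod_volume_eq_prod (fun j s => (Set.Ioc (-(N/2)) (N/2)).indicator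
      (fun s => (N:ℂ)⁻¹ * Complex.exp ((2 * Real.pi * Complex.I * (n j / N - x j)) * s)) s)]
  rw [← (PiLp.volume_preserving_ofLp (Fin d)).integral_comp
    (MeasurableEquiv.toLp 2 (Fin d → ℝ)).symm.measurableEmbedding]
  refine integral_congr_ae (.of_forall fun ξ => ?_)
  have hmem : ∀ j, ξ j / N ∈ Set.Ioc (-1/2 : ℝ) (-1/2 + 1) ↔ ξ j ∈ Set.Ioc (-(N/2)) (N/2) := by
    intro j
    rw [Set.mem_Ioc, Set.mem_Ioc, lt_div_iff₀ hN, div_le_iff₀ hN]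
    constructor <;> rintro ⟨a, b⟩ <;> constructor <;> linarith
  dsimp only
  by_cases hξ : ξ ∈ QQ d N
  · rw [bF, Set.indicator_of_mem hξ]
    have : ∀ j, ξ j ∈ Set.Ioc (-(N/2)) (N/2) := fun j => (hmem j).mp (hξ j)
    simp_rw [Set.indicator_of_mem (this _)]
    rw [Finset.prod_mul_distrib, ← Complex.exp_sum, ech, smul_eq_mul, mul_left_comm,
      ← Complex.exp_add]
    congr 1
    · simp
    · congr 1
      simp only [PiLp.inner_apply, latticePt]
      push_cast
      rw [Finset.mul_sum, Finset.mul_sum, Finset.sum_mul, ← Finset.sum_add_distrib]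
      refine Finset.sum_congr rfl fun j _ => ?_
      simp
      ring
  · rw [bF, Set.indicator_of_notMem hξ, smul_zero]
    have : ∃ j, ξ j ∉ Set.Ioc (-(N/2)) (N/2) := by
      by_contra! hcon
      exact hξ fun j => (hmem j).mpr (hcon j)
    obtain ⟨j, hj⟩ := this
    exact (Finset.prod_eq_zero (Finset.mem_univ j) (Set.indicator_of_notMem hj _)).symm


theorem eLpNorm_two_sq {α F : Type*} [MeasurableSpace α] [NormedAddCommGroup F] (f : α → F)
    (μ : Measure α) : eLpNorm f 2 μ ^ 2 = ∫⁻ x, ‖f x‖ₑ ^ 2 ∂μ := by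
  have := eLpNorm_nnreal_pow_eq_lintegral (μ := μ) (f := f) (p := 2) two_ne_zero
  simpa using this

theorem le_of_sq_le {a b c : ℝ≥0∞} (h : a ^ 2 ≤ c * b ^ 2) : a ≤ c ^ (1/2 : ℝ) * b := by
  have h1 := ENNReal.rpow_le_rpow h (by norm_num : (0:ℝ) ≤ 1/2)
  rw [ENNReal.mul_rpow_of_nonneg _ _ (by norm_num), ← ENNReal.rpow_natCast, ← ENNReal.rpow_mul,
    ← ENNReal.rpow_natCast, ← ENNReal.rpow_mul] at h1
  norm_num at h1
  simpa using h1

/-- the aliasing constant -/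
def kap (d : ℕ) (N t : ℝ) : ℝ≥0∞ := ∑' k : {k : Fin d → ℤ // k ≠ 0},
        ENNReal.ofReal (Real.exp (-(Real.pi ^ 2 * (2 * t) * N ^ 2) * ‖k.1‖ ^ 2))

theorem enorm_mm_mul_sq {d : ℕ} (t : ℝ) (ξ : EE d) (z : ℂ) :
    ‖(mm t ξ : ℂ) * z‖ₑ ^ 2 = ENNReal.ofReal (mm (2 * t) ξ) * ‖z‖ₑ ^ 2 := by
  rw [enorm_mul, mul_pow, ← mm_sq, ENNReal.ofReal_pow (mm_pos t ξ).le]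
  congr 2
  rw [← ofReal_norm, Complex.norm_real, Real.norm_of_nonneg (mm_pos t ξ).le]

theorem est_compl {d : ℕ} {N : ℝ} (hN : 0 < N) {t : ℝ} (ht : 0 < t)
    {h : UnitAddTorus (Fin d) → ℂ} (hh : Measurable h) :
    ∫⁻ ξ in (QQ d N)ᶜ, ‖(mm t ξ : ℂ) * h (tor N ξ)‖ₑ ^ 2 ≤
      kap d N t * (ENNReal.ofReal (N ^ d) * ∫⁻ θ, ‖h θ‖ₑ ^ 2) := by
  simp_rw [enorm_mm_mul_sq]
  exact lintegral_compl_le hN (s := 2 * t) (by positivity)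
    (f := fun θ => ‖h θ‖ₑ ^ 2) (by fun_prop)

theorem est_full {d : ℕ} {N : ℝ} (hN : 0 < N) {t : ℝ} (ht : 0 < t)
    {h : UnitAddTorus (Fin d) → ℂ} (hh : Measurable h) :
    ∫⁻ ξ, ‖(mm t ξ : ℂ) * h (tor N ξ)‖ₑ ^ 2 ≤
      ((1 + kap d N t) * ENNReal.ofReal (N ^ d)) * ∫⁻ θ, ‖h θ‖ₑ ^ 2 := by
  rw [← lintegral_add_compl _ (measurableSet_QQ d N), mul_assoc, add_mul, one_mul]
  refine add_le_add ?_ (est_compl hN ht hh)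
  rw [← lintegral_tor hN (f := fun θ => ‖h θ‖ₑ ^ 2) (by fun_prop)]
  refine lintegral_mono fun ξ => ?_
  rw [enorm_mm_mul_sq]
  refine mul_le_of_le_one_left (zero_le) ?_
  exact ENNReal.ofReal_le_one.mpr (mm_le_one (by positivity) ξ)

theorem est_w {d : ℕ} {N : ℝ} (hN : 0 < N) {t : ℝ} (ht : 0 < t) (w : EE d → ℂ) :
    ∫⁻ ξ in (QQ d N)ᶜ, ‖(mm t ξ : ℂ) * w ξ‖ₑ ^ 2 ≤
      ENNReal.ofReal (Real.exp (-(Real.pi ^ 2 * (2 * t) * N ^ 2))) * ∫⁻ ξ, ‖w ξ‖ₑ ^ 2 := by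
  rw [← lintegral_const_mul' _ _ ENNReal.ofReal_ne_top]
  refine le_trans ?_ (setLIntegral_le_lintegral (QQ d N)ᶜ _)
  refine setLIntegral_mono' (measurableSet_QQ d N).compl fun ξ hξ => ?_
  rw [enorm_mm_mul_sq]
  gcongr
  exact mm_le_compl hN (by positivity) hξ

/-- periodization -/
def gT {d : ℕ} (N : ℝ) (w : EE d → ℂ) (θ : UnitAddTorus (Fin d)) : ℂ :=
  w (WithLp.toLp 2 fun j => N * (AddCircle.equivIoc (1:ℝ) (-1/2) (θ j)).1)

theorem measurable_gT {d : ℕ} (N : ℝ) {w : EE d → ℂ} (hw : Measurable w) :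
    Measurable (gT N w) := by
  unfold gT
  refine hw.comp ?_
  refine (MeasurableEquiv.toLp 2 (Fin d → ℝ)).measurable.comp ?_
  refine measurable_pi_lambda _ fun j => ?_
  refine Measurable.const_mul ?_ _
  exact measurable_subtype_coe.comp
    ((AddCircle.measurableEquivIoc (1:ℝ) (-1/2)).measurable.comp (measurable_pi_apply j))

theorem gT_tor {d : ℕ} {N : ℝ} (hN : 0 < N) (w : EE d → ℂ) {ξ : EE d} (hξ : ξ ∈ QQ d N) :
    gT N w (tor N ξ) = w ξ := by
  unfold gT tor
  congr 1
  ext j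
  have := AddCircle.equivIoc_coe_of_mem (p := (1:ℝ)) (hξ j)
  dsimp only
  rw [this]
  exact mul_div_cancel₀ _ hN.ne'

theorem lintegral_gT {d : ℕ} {N : ℝ} (hN : 0 < N) {w : EE d → ℂ} (hw : Measurable w) :
    ENNReal.ofReal (N ^ d) * ∫⁻ θ, ‖gT N w θ‖ₑ ^ 2 ≤ ∫⁻ ξ, ‖w ξ‖ₑ ^ 2 := by
  have hg := measurable_gT N hw
  rw [← lintegral_tor hN (f := fun θ => ‖gT N w θ‖ₑ ^ 2) (by fun_prop)]
  refine le_trans (le_of_eq ?_) (setLIntegral_le_lintegral (QQ d N) _)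
  refine setLIntegral_congr_fun (measurableSet_QQ d N) fun ξ hξ => ?_
  rw [gT_tor hN w hξ]

theorem memLp_gT {d : ℕ} {N : ℝ} (hN : 0 < N) {w : EE d → ℂ} (hw : Measurable w)
    (hw2 : MemLp w 2 volume) : MemLp (gT N w) 2 volume := by
  refine ⟨(measurable_gT N hw).aestronglyMeasurable, ?_⟩
  have h1 := lintegral_gT hN hw
  rw [← eLpNorm_two_sq, ← eLpNorm_two_sq] at h1
  have h2 : eLpNorm w 2 volume ^ 2 < ∞ := ENNReal.pow_lt_top hw2.2
  have h3 := ENNReal.lt_top_of_mul_ne_top_right (h1.trans_lt h2).ne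
    (by simpa using pow_pos hN d)
  by_contra hcon
  rw [not_lt, top_le_iff] at hcon
  rw [hcon] at h3
  simp at h3

theorem coeff_gT {d : ℕ} {N : ℝ} (hN : 0 < N) {w : EE d → ℂ} (hw : Measurable w)
    (n : Fin d → ℤ) :
    UnitAddTorus.mFourierCoeff (gT N w) n = ∫ ξ, (starRingEnd ℂ) (bF N n ξ) * w ξ := by
  have hg := measurable_gT N hw
  have hm : AEStronglyMeasurable (fun θ => UnitAddTorus.mFourier (-n) θ • gT N w θ)
      (Measure.map (tor N) (volume.restrict (QQ d N))) := by
    apply Measurable.aestronglyMeasurable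
    have := (UnitAddTorus.mFourier (-n)).continuous.measurable
    exact this.smul hg
  have h1 := integral_map (measurable_tor N).aemeasurable hm
  rw [map_tor hN, integral_smul_measure, ENNReal.toReal_ofReal (by positivity)] at h1
  have h2 : ∫ ξ, (starRingEnd ℂ) (bF N n ξ) * w ξ = ((N ^ d)⁻¹ : ℝ) •
      ∫ ξ in QQ d N, UnitAddTorus.mFourier (-n) (tor N ξ) • gT N w (tor N ξ) := by
    rw [← integral_smul, ← integral_indicator (measurableSet_QQ d N)]
    congr 1
    ext ξ
    by_cases hξ : ξ ∈ QQ d N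
    · rw [bF, Set.indicator_of_mem hξ, Set.indicator_of_mem hξ, gT_tor hN w hξ,
        UnitAddTorus.mFourier_neg, mFourier_tor, map_mul]
      simp
      ring
    · rw [bF, Set.indicator_of_notMem hξ, Set.indicator_of_notMem hξ]
      simp
  rw [h2, ← h1, smul_smul, inv_mul_cancel₀ (by positivity), one_smul]
  rfl

theorem tendsto_gT {d : ℕ} {N : ℝ} (hN : 0 < N) {w : EE d → ℂ} (hw : Measurable w)
    (hw2 : MemLp w 2 volume) :
    Tendsto (fun s : Finset (Fin d → ℤ) => eLpNorm (fun θ => gT N w θ - ∑ n ∈ s,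
      UnitAddTorus.mFourierCoeff (gT N w) n * UnitAddTorus.mFourier n θ) 2 volume) atTop (𝓝 0) := by
  have hg := memLp_gT hN hw hw2
  have h := UnitAddTorus.hasSum_mFourier_series_L2 hg.toLp
  have hc : ∀ n, UnitAddTorus.mFourierCoeff hg.toLp n = UnitAddTorus.mFourierCoeff (gT N w) n := by
    intro n
    unfold UnitAddTorus.mFourierCoeff
    apply integral_congr_ae
    filter_upwards [hg.coeFn_toLp] with θ hθ
    rw [hθ]
  have h2 := Lp.tendsto_Lp_iff_tendsto_eLpNorm' _ _ |>.mp h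
  refine h2.congr fun s => ?_
  rw [← eLpNorm_neg]
  apply eLpNorm_congr_ae
  have hall : ∀ᵐ θ : UnitAddTorus (Fin d), ∀ n : Fin d → ℤ,
      UnitAddTorus.mFourierLp 2 n θ = UnitAddTorus.mFourier n θ :=
    ae_all_iff.mpr fun n => UnitAddTorus.coeFn_mFourierLp 2 n
  have hall2 : ∀ᵐ θ : UnitAddTorus (Fin d), ∀ n : Fin d → ℤ,
      (UnitAddTorus.mFourierCoeff (gT N w) n • UnitAddTorus.mFourierLp 2 n :
        Lp ℂ 2 (volume : Measure (UnitAddTorus (Fin d)))) θ =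
      (UnitAddTorus.mFourierCoeff (gT N w) n • ⇑(UnitAddTorus.mFourierLp 2 n)) θ :=
    ae_all_iff.mpr fun n => Lp.coeFn_smul _ _
  simp_rw [hc]
  filter_upwards [hg.coeFn_toLp, hall, hall2, Lp.coeFn_finsetSum s (fun n =>
    UnitAddTorus.mFourierCoeff (gT N w) n • UnitAddTorus.mFourierLp 2 n)] with θ h1 h2 h3 h4
  simp only [Pi.neg_apply, Pi.sub_apply]
  rw [h4, h1, neg_sub, Finset.sum_apply]
  congr 1
  refine Finset.sum_congr rfl fun n _ => ?_
  rw [h3, Pi.smul_apply, h2, smul_eq_mul]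


theorem eLpNorm_fourier {d : ℕ} (f : Lp ℂ 2 (volume : Measure (EE d))) :
    eLpNorm (𝓕 f : Lp ℂ 2 (volume : Measure (EE d))) 2 volume = eLpNorm f 2 volume := by
  rw [← Lp.enorm_def, ← Lp.enorm_def, ← ofReal_norm, ← ofReal_norm, Lp.norm_fourier_eq]

theorem eLpNorm_fourierInv {d : ℕ} (f : Lp ℂ 2 (volume : Measure (EE d))) :
    eLpNorm (𝓕⁻ f : Lp ℂ 2 (volume : Measure (EE d))) 2 volume = eLpNorm f 2 volume := by
  rw [← eLpNorm_fourier, FourierTransform.fourier_fourierInv_eq]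

theorem coef_eq {d : ℕ} {N : ℝ} (hN : 0 < N) {w : EE d → ℂ} (hw : Measurable w)
    (hw2 : MemLp w 2 volume) {u : EE d → ℝ}
    (hu : ⇑(𝓕 (hw2.toLp w) : Lp ℂ 2 (volume : Measure (EE d))) =ᵐ[volume] fun x => (u x : ℂ))
    (n : Fin d → ℤ) :
    ((∫ x, u x * fN d N n x : ℝ) : ℂ) = UnitAddTorus.mFourierCoeff (gT N w) n := by
  have hb := memLp_bF (d := d) hN n 2
  have hb1 : Integrable (bF N n : EE d → ℂ) := memLp_one_iff_integrable.mp (memLp_bF (d := d) hN n 1)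
  rw [coeff_gT hN hw]
  have h := Lp.inner_fourier_eq (hb.toLp (bF N n)) (hw2.toLp w)
  rw [L2.inner_def, L2.inner_def] at h
  have h2 : ∫ ξ, inner ℂ ((hb.toLp (bF N n)) ξ) ((hw2.toLp w) ξ) =
      ∫ ξ, (starRingEnd ℂ) (bF N n ξ) * w ξ := by
    apply integral_congr_ae
    filter_upwards [hb.coeFn_toLp, hw2.coeFn_toLp] with ξ h3 h4
    rw [h3, h4, RCLike.inner_apply, mul_comm]
  rw [← h2, ← h, ← integral_complex_ofReal]
  apply integral_congr_ae
  filter_upwards [hu, fourier_toLp_ae hb1 hb] with x h3 h4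
  rw [h3, h4, fourier_bF hN, RCLike.inner_apply, Complex.conj_ofReal]
  push_cast
  rfl

theorem memLp_full {d : ℕ} {N : ℝ} (hN : 0 < N) {t : ℝ} (ht : 0 < t) (hk : kap d N t ≠ ∞)
    {h : UnitAddTorus (Fin d) → ℂ} (hh : Measurable h) (hh2 : MemLp h 2 volume) :
    MemLp (fun ξ : EE d => (mm t ξ : ℂ) * h (tor N ξ)) 2 volume := by
  constructor
  · apply Measurable.aestronglyMeasurable
    exact (Complex.continuous_ofReal.comp (continuous_mm t)).measurable.mul
      (hh.comp (measurable_tor N))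
  · have h1 := est_full hN ht hh
    rw [← eLpNorm_two_sq, ← eLpNorm_two_sq] at h1
    refine (le_of_sq_le h1).trans_lt (ENNReal.mul_lt_top ?_ hh2.2)
    refine ENNReal.rpow_lt_top_of_nonneg (by norm_num) ?_
    exact ENNReal.mul_ne_top (by simpa using hk) ENNReal.ofReal_ne_top

theorem hasSum_main {d : ℕ} {N : ℝ} (hN : 0 < N) {t : ℝ} (ht : 0 < t) (hk : kap d N t ≠ ∞)
    {w : EE d → ℂ} (hw : Measurable w) (hw2 : MemLp w 2 volume)
    (hF : MemLp (fun ξ : EE d => (mm t ξ : ℂ) * gT N w (tor N ξ)) 2 volume)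
    (v : (Fin d → ℤ) → ℝ) (hv : ∀ n, (v n : ℂ) = - UnitAddTorus.mFourierCoeff (gT N w) n) :
    HasSumL2 d (fun n x => v n * heatKer d t (x - latticePt d N n))
      (fun x => (-(𝓕 hF.toLp : Lp ℂ 2 (volume : Measure (EE d))) x).re) := by
  unfold HasSumL2
  set c : ℝ≥0∞ := ((1 + kap d N t) * ENNReal.ofReal (N ^ d)) ^ (1/2 : ℝ) with hc
  have hcf : c ≠ ∞ := by
    refine ENNReal.rpow_ne_top_of_nonneg (by norm_num) ?_
    exact ENNReal.mul_ne_top (by simpa using hk) ENNReal.ofReal_ne_top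
  have hlim := ENNReal.Tendsto.const_mul (a := c) (tendsto_gT hN hw hw2) (Or.inr hcf)
  rw [mul_zero] at hlim
  refine tendsto_of_tendsto_of_tendsto_of_le_of_le tendsto_const_nhds hlim
    (fun s => zero_le) (fun s => ?_)
  set A : (Fin d → ℤ) → Lp ℂ 2 (volume : Measure (EE d)) :=
    fun n => (memLp_aF ht (latticePt d N n)).toLp with hA
  set D : Lp ℂ 2 (volume : Measure (EE d)) :=
    -hF.toLp - ∑ n ∈ s, (v n : ℂ) • A n with hD
  have hFD : (𝓕 D : Lp ℂ 2 (volume : Measure (EE d))) = -𝓕 hF.toLp -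
      ∑ n ∈ s, (v n : ℂ) • (𝓕 (A n) : Lp ℂ 2 (volume : Measure (EE d))) := by
    change Lp.fourierTransformₗᵢ (EE d) ℂ D = -(Lp.fourierTransformₗᵢ (EE d) ℂ _) -
      ∑ n ∈ s, (v n : ℂ) • (Lp.fourierTransformₗᵢ (EE d) ℂ (A n))
    rw [hD]
    simp only [map_sub, map_neg, map_sum, map_smul]
  have hall1 : ∀ᵐ x : EE d, ∀ n, (𝓕 (A n) : Lp ℂ 2 (volume : Measure (EE d))) x =
      (heatKer d t (x - latticePt d N n) : ℂ) := by
    refine ae_all_iff.mpr fun n => ?_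
    filter_upwards [fourier_toLp_ae (integrable_aF ht (latticePt d N n)) (memLp_aF ht _)] with x hx
    rw [hA, hx, fourier_aF ht]
  have hall2 : ∀ᵐ x : EE d, ∀ n, ((v n : ℂ) • (𝓕 (A n) : Lp ℂ 2 (volume : Measure (EE d))) :
      Lp ℂ 2 (volume : Measure (EE d))) x =
      ((v n : ℂ) • ⇑(𝓕 (A n) : Lp ℂ 2 (volume : Measure (EE d)))) x :=
    ae_all_iff.mpr fun n => Lp.coeFn_smul _ _
  have hall3 : ∀ᵐ x : EE d, ∀ n, ((v n : ℂ) • A n :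
      Lp ℂ 2 (volume : Measure (EE d))) x = ((v n : ℂ) • ⇑(A n)) x :=
    ae_all_iff.mpr fun n => Lp.coeFn_smul _ _
  have hall4 : ∀ᵐ x : EE d, ∀ n, A n x = aF t (latticePt d N n) x :=
    ae_all_iff.mpr fun n => (memLp_aF ht (latticePt d N n)).coeFn_toLp
  have e1 : eLpNorm (fun x => (-(𝓕 hF.toLp : Lp ℂ 2 (volume : Measure (EE d))) x).re -
      ∑ n ∈ s, v n * heatKer d t (x - latticePt d N n)) 2 volume ≤
      eLpNorm (𝓕 D : Lp ℂ 2 (volume : Measure (EE d))) 2 volume := by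
    apply eLpNorm_mono_ae
    rw [hFD]
    filter_upwards [Lp.coeFn_sub (-𝓕 hF.toLp)
      (∑ n ∈ s, (v n : ℂ) • (𝓕 (A n) : Lp ℂ 2 (volume : Measure (EE d)))),
      Lp.coeFn_neg (𝓕 hF.toLp), Lp.coeFn_finsetSum s
      (fun n => (v n : ℂ) • (𝓕 (A n) : Lp ℂ 2 (volume : Measure (EE d)))), hall1, hall2]
      with x h1 h2 h3 h4 h5
    rw [h1, Pi.sub_apply, h2, Pi.neg_apply, h3, Finset.sum_apply]
    simp_rw [h5, Pi.smul_apply, h4, smul_eq_mul, ← Complex.ofReal_mul, ← Complex.ofReal_sum]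
    rw [← Complex.ofReal_re (∑ n ∈ s, v n * heatKer d t (x - latticePt d N n)),
      ← Complex.sub_re, Complex.ofReal_re]
    exact Complex.abs_re_le_norm _
  refine e1.trans ?_
  rw [eLpNorm_fourier]
  set h : UnitAddTorus (Fin d) → ℂ := fun θ => gT N w θ - ∑ n ∈ s,
      UnitAddTorus.mFourierCoeff (gT N w) n * UnitAddTorus.mFourier n θ with hh
  have hhm : Measurable h := by
    refine (measurable_gT N hw).sub (Finset.measurable_sum _ fun n _ => ?_)
    exact (UnitAddTorus.mFourier n).continuous.measurable.const_mul _
  have e2 : eLpNorm D 2 volume = eLpNorm (fun ξ : EE d => (mm t ξ : ℂ) * h (tor N ξ)) 2 volume := by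
    rw [← eLpNorm_neg]
    apply eLpNorm_congr_ae
    filter_upwards [Lp.coeFn_sub (-hF.toLp) (∑ n ∈ s, (v n : ℂ) • A n),
      Lp.coeFn_neg hF.toLp, Lp.coeFn_finsetSum s (fun n => (v n : ℂ) • A n), hall3, hall4,
      hF.coeFn_toLp] with x h1 h2 h3 h4 h5 h6
    rw [Pi.neg_apply, hD, h1, Pi.sub_apply, h2, Pi.neg_apply, h3, Finset.sum_apply, h6]
    simp_rw [h4, Pi.smul_apply, h5, hv, smul_eq_mul, hh, mFourier_tor, aF, mul_sub,
      Finset.mul_sum, neg_mul, Finset.sum_neg_distrib]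
    rw [sub_neg_eq_add, neg_add, neg_neg, sub_eq_add_neg]
    congr 2
    exact Finset.sum_congr rfl fun n _ => by ring
  rw [e2]
  have h1 := est_full hN ht hhm
  rw [← eLpNorm_two_sq, ← eLpNorm_two_sq] at h1
  exact le_of_sq_le h1

theorem diff_bound {d : ℕ} {N : ℝ} (hN : 0 < N) {t : ℝ} (ht : 0 < t)
    {w : EE d → ℂ} (hw : Measurable w) {e : ℝ} (he : 0 < e)
    (hk : kap d N t ≤ ENNReal.ofReal ((e/2) ^ 2))
    (hk2 : Real.exp (-(Real.pi ^ 2 * (2 * t) * N ^ 2)) ≤ (e/2) ^ 2) :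
    eLpNorm (fun ξ : EE d => (mm t ξ : ℂ) * w ξ - (mm t ξ : ℂ) * gT N w (tor N ξ)) 2 volume ≤
      ENNReal.ofReal e * eLpNorm w 2 volume := by
  have key : ∀ f : EE d → ℂ, ∫⁻ ξ in (QQ d N)ᶜ, ‖f ξ‖ₑ ^ 2 ≤
      ENNReal.ofReal ((e/2)^2) * ∫⁻ ξ, ‖w ξ‖ₑ ^ 2 →
      eLpNorm ((QQ d N)ᶜ.indicator f) 2 volume ≤ ENNReal.ofReal (e/2) * eLpNorm w 2 volume := by
    intro f hf
    rw [eLpNorm_indicator_eq_eLpNorm_restrict (measurableSet_QQ d N).compl]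
    rw [← eLpNorm_two_sq, ← eLpNorm_two_sq] at hf
    have := le_of_sq_le hf
    rwa [ENNReal.ofReal_pow (by positivity), ← ENNReal.rpow_natCast, ← ENNReal.rpow_mul,
      show ((2:ℕ):ℝ) * (1/2) = 1 by norm_num, ENNReal.rpow_one] at this
  have hm : Measurable (fun ξ : EE d => (mm t ξ : ℂ)) :=
    (Complex.continuous_ofReal.comp (continuous_mm t)).measurable
  have k1 := key (fun ξ => (mm t ξ : ℂ) * w ξ) ((est_w hN ht w).trans (by gcongr))
  have k2 := key (fun ξ => (mm t ξ : ℂ) * gT N w (tor N ξ))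
    ((est_compl hN ht (measurable_gT N hw)).trans (mul_le_mul' hk (lintegral_gT hN hw)))
  have e1 : (fun ξ : EE d => (mm t ξ : ℂ) * w ξ - (mm t ξ : ℂ) * gT N w (tor N ξ)) =
      (QQ d N)ᶜ.indicator (fun ξ => (mm t ξ : ℂ) * w ξ) -
      (QQ d N)ᶜ.indicator (fun ξ => (mm t ξ : ℂ) * gT N w (tor N ξ)) := by
    ext ξ
    rw [Pi.sub_apply]
    by_cases hξ : ξ ∈ QQ d N
    · rw [Set.indicator_of_notMem (by simpa using hξ), Set.indicator_of_notMem (by simpa using hξ),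
        gT_tor hN w hξ]
      simp
    · rw [Set.indicator_of_mem (by simpa using hξ), Set.indicator_of_mem (by simpa using hξ)]
  rw [e1]
  refine (eLpNorm_sub_le ?_ ?_ (by norm_num)).trans ((add_le_add k1 k2).trans (le_of_eq ?_))
  · exact ((hm.mul hw).indicator (measurableSet_QQ d N).compl).aestronglyMeasurable
  · exact ((hm.mul ((measurable_gT N hw).comp (measurable_tor N))).indicator
      (measurableSet_QQ d N).compl).aestronglyMeasurable
  · rw [← add_mul, ← ENNReal.ofReal_add (by positivity) (by positivity), add_halves]

theorem kap_bound {d : ℕ} {N t A L ε : ℝ} (hA : 2 ≤ A)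
    (hAK : Real.exp (-A) * ((∑' k : Fin d → ℤ, Real.exp (-‖k‖^2)) + 1) ≤ 1/4)
    (hε : 0 < ε) (hε1 : ε < 1)
    (hL : L = 1 + Real.log (1 / ε)) (hN : 2 * A * L ≤ Real.pi ^ 2 * (2 * t) * N ^ 2) :
    kap d N t ≤ ENNReal.ofReal ((ε/2) ^ 2) ∧
    Real.exp (-(Real.pi ^ 2 * (2 * t) * N ^ 2)) ≤ (ε/2) ^ 2 := by
  set K := ∑' k : Fin d → ℤ, Real.exp (-‖k‖^2) with hK
  have hK0 : 0 ≤ K := tsum_nonneg fun k => (Real.exp_pos _).le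
  have hlog : Real.log ε < 0 := Real.log_neg hε hε1
  rw [one_div, Real.log_inv] at hL
  have hL1 : 1 ≤ L := by linarith
  have hAL : Real.exp (-(A * L)) ≤ Real.exp (-A) * ε ^ 2 := by
    have : ε ^ 2 = Real.exp (2 * Real.log ε) := by
      rw [two_mul, Real.exp_add, Real.exp_log hε, sq]
    rw [this, ← Real.exp_add]
    apply Real.exp_le_exp.mpr
    rw [hL]
    nlinarith
  have hfin : Real.exp (-(A * L)) * (K + 1) ≤ (ε/2)^2 := by
    calc _ ≤ (Real.exp (-A) * ε ^ 2) * (K + 1) := by gcongr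
      _ = (Real.exp (-A) * (K + 1)) * ε ^ 2 := by ring
      _ ≤ 1/4 * ε ^ 2 := by gcongr
      _ = _ := by ring
  have hpos := Real.exp_pos (-(A * L))
  have hAL1 : 1 ≤ A * L := by nlinarith
  constructor
  · have hs := summable_exp_norm d
    have h1 : kap d N t ≤ ∑' k : Fin d → ℤ,
        ENNReal.ofReal (Real.exp (-(A * L)) * Real.exp (-‖k‖^2)) := by
      unfold kap
      refine le_trans ?_ (ENNReal.tsum_comp_le_tsum_of_injective
        (f := fun k : {k : Fin d → ℤ // k ≠ 0} => k.1) Subtype.val_injective _)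
      refine ENNReal.tsum_le_tsum fun k => ?_
      apply ENNReal.ofReal_le_ofReal
      rw [← Real.exp_add]
      apply Real.exp_le_exp.mpr
      have hk1 : 1 ≤ ‖k.1‖ := by
        obtain ⟨j, hj⟩ := Function.ne_iff.mp k.2
        refine le_trans ?_ (norm_le_pi_norm k.1 j)
        rw [Int.norm_eq_abs]
        exact_mod_cast Int.one_le_abs hj
      have hk2 : 1 ≤ ‖k.1‖ ^ 2 := one_le_pow₀ hk1
      nlinarith
    refine h1.trans ?_
    rw [← ENNReal.ofReal_tsum_of_nonneg (fun k => by positivity) (hs.mul_left _), _root_.tsum_mul_left]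
    apply ENNReal.ofReal_le_ofReal
    nlinarith
  · have : Real.exp (-(Real.pi ^ 2 * (2 * t) * N ^ 2)) ≤ Real.exp (-(A * L)) := by
      apply Real.exp_le_exp.mpr
      nlinarith
    nlinarith

/-- Feedback null approximate controllability: there is `C₁ = C₁(d) > 0` such that for any
`0 < τ < T`, `ε ∈ (0,1)`, `y₀ ∈ L²(ℝ^d)` and `N ≥ C₁ √((1/(T-τ))(1 + ln(1/ε)))`, with the
feedback coefficients `v_n = -⟨e^{τΔ}y₀, f_{N,n}⟩`, the family `(v_n G_{T-τ}(· - n/N))_n`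
is summable in `L²(ℝ^d)` and the state `y(T,·) = e^{TΔ}y₀ + Σ_n v_n G_{T-τ}(· - n/N)`
satisfies `‖y(T,·)‖ ≤ ε ‖y₀‖`. -/
theorem statement18 (d : ℕ) (hd : 0 < d) :
    ∃ C₁ : ℝ, 0 < C₁ ∧
      ∀ T τ : ℝ, 0 < τ → τ < T →
      ∀ ε : ℝ, ε ∈ Set.Ioo (0 : ℝ) 1 →
      ∀ y₀ : EuclideanSpace ℝ (Fin d) → ℝ, MemLp y₀ 2 volume →
      ∀ N : ℝ, C₁ * Real.sqrt ((1 / (T - τ)) * (1 + Real.log (1 / ε))) ≤ N →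
        ∃ S : EuclideanSpace ℝ (Fin d) → ℝ, MemLp S 2 volume ∧
          HasSumL2 d
            (fun n x => (-∫ y, heatSol d y₀ τ y * fN d N n y) *
              heatKer d (T - τ) (x - latticePt d N n)) S ∧
          l2norm d (fun x => heatSol d y₀ T x + S x) ≤ ε * l2norm d y₀ := by
  set K := ∑' k : Fin d → ℤ, Real.exp (-‖k‖^2) with hK
  have hK0 : 0 ≤ K := tsum_nonneg fun k => (Real.exp_pos _).le
  set A : ℝ := 2 + Real.log (4 * (K + 1)) with hA
  have hlog4 : 0 ≤ Real.log (4 * (K + 1)) := Real.log_nonneg (by linarith)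
  have hA2 : 2 ≤ A := by linarith
  have hAK : Real.exp (-A) * (K + 1) ≤ 1/4 := by
    have h1 : Real.exp (-A) = Real.exp (-2) * (4 * (K + 1))⁻¹ := by
      rw [hA, neg_add, Real.exp_add, Real.exp_neg (Real.log _), Real.exp_log (by positivity)]
    have h2 : Real.exp (-2) ≤ 1 := Real.exp_le_one_iff.mpr (by norm_num)
    have h3 : Real.exp (-A) * (K + 1) = Real.exp (-2) * (1/4) := by
      rw [h1]
      field_simp
    rw [h3]
    linarith
  refine ⟨Real.sqrt (2 * A), Real.sqrt_pos.mpr (by linarith), ?_⟩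
  intro T τ hτ hτT ε hε y₀ hy N hN
  set t := T - τ with ht_def
  have ht : 0 < t := sub_pos.mpr hτT
  set L := 1 + Real.log (1 / ε) with hL
  have hL1 : 1 ≤ L := by
    have : 0 ≤ Real.log (1 / ε) := Real.log_nonneg (by
      rw [le_div_iff₀ hε.1]
      linarith [hε.2])
    linarith
  have hNpos : 0 < N := lt_of_lt_of_le (mul_pos (Real.sqrt_pos.mpr (by linarith))
    (Real.sqrt_pos.mpr (by positivity))) hN
  have hNt : 2 * A * L ≤ t * N ^ 2 := by
    have h1 := pow_le_pow_left₀ (by positivity) hN 2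
    rw [mul_pow, Real.sq_sqrt (by linarith), Real.sq_sqrt (by positivity)] at h1
    have h2 := mul_le_mul_of_nonneg_left h1 ht.le
    refine le_trans (le_of_eq ?_) h2
    field_simp
  have hNb : 2 * A * L ≤ Real.pi ^ 2 * (2 * t) * N ^ 2 := by
    have hpi : 1 ≤ Real.pi ^ 2 := one_le_pow₀ (by linarith [Real.pi_gt_three])
    have : 0 ≤ t * N ^ 2 := by positivity
    nlinarith
  obtain ⟨hk1, hk2⟩ := kap_bound (d := d) hA2 hAK hε.1 hε.2 hL hNb
  have hk : kap d N t ≠ ∞ := ne_top_of_le_ne_top ENNReal.ofReal_ne_top hk1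
  have hT : 0 < T := hτ.trans hτT
  set Y : Lp ℂ 2 (volume : Measure (EE d)) := 𝓕⁻ ((memLp_ofReal hy).toLp) with hY
  set w : EE d → ℂ := fun ξ => (mm τ ξ : ℂ) * Y ξ with hw_def
  have hwm : Measurable w :=
    (Complex.continuous_ofReal.comp (continuous_mm τ)).measurable.mul
      (Lp.stronglyMeasurable Y).measurable
  have hw2 : MemLp w 2 volume := memLp_mul_mm hτ.le (Lp.memLp Y)
  have huτ : ⇑(𝓕 (hw2.toLp w) : Lp ℂ 2 (volume : Measure (EE d))) =ᵐ[volume]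
    fun x => (heatSol d y₀ τ x : ℂ) := heatSol_ae hy hτ
  have hV2 : MemLp (fun ξ => (mm T ξ : ℂ) * Y ξ) 2 volume := memLp_mul_mm hT.le (Lp.memLp Y)
  have huT : ⇑(𝓕 (hV2.toLp) : Lp ℂ 2 (volume : Measure (EE d))) =ᵐ[volume]
    fun x => (heatSol d y₀ T x : ℂ) := heatSol_ae hy hT
  have hF := memLp_full hNpos ht hk (measurable_gT N hwm) (memLp_gT hNpos hwm hw2)
  have hsum := hasSum_main hNpos ht hk hwm hw2 hF
    (fun n => -∫ y, heatSol d y₀ τ y * fN d N n y) (fun n => by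
      rw [← coef_eq hNpos hwm hw2 huτ n]
      push_cast
      rfl)
  refine ⟨fun x => (-(𝓕 hF.toLp : Lp ℂ 2 (volume : Measure (EE d))) x).re, ?_, hsum, ?_⟩
  · exact ((Lp.memLp (𝓕 hF.toLp : Lp ℂ 2 (volume : Measure (EE d)))).neg).re
  have hwY : eLpNorm w 2 volume ≤ eLpNorm y₀ 2 volume := by
    have h1 : eLpNorm w 2 volume ≤ eLpNorm Y 2 volume := by
      apply eLpNorm_mono
      intro ξ
      rw [hw_def, norm_mul, Complex.norm_real, Real.norm_of_nonneg (mm_pos τ ξ).le]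
      exact mul_le_of_le_one_left (norm_nonneg _) (mm_le_one hτ.le ξ)
    refine h1.trans (le_of_eq ?_)
    rw [hY, eLpNorm_fourierInv, eLpNorm_congr_ae (memLp_ofReal hy).coeFn_toLp]
    apply eLpNorm_congr_norm_ae
    exact .of_forall fun x => Complex.norm_real _
  have hfin : eLpNorm (fun x => heatSol d y₀ T x +
      (-(𝓕 hF.toLp : Lp ℂ 2 (volume : Measure (EE d))) x).re) 2 volume ≤
      ENNReal.ofReal ε * eLpNorm y₀ 2 volume := by
    have e1 : eLpNorm (fun x => heatSol d y₀ T x +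
        (-(𝓕 hF.toLp : Lp ℂ 2 (volume : Measure (EE d))) x).re) 2 volume ≤
        eLpNorm (𝓕 (hV2.toLp - hF.toLp) : Lp ℂ 2 (volume : Measure (EE d))) 2 volume := by
      have hFD : (𝓕 (hV2.toLp - hF.toLp) : Lp ℂ 2 (volume : Measure (EE d))) =
          𝓕 hV2.toLp - 𝓕 hF.toLp := (Lp.fourierTransformₗᵢ (EE d) ℂ).map_sub _ _
      rw [hFD]
      apply eLpNorm_mono_ae
      filter_upwards [huT, Lp.coeFn_sub (𝓕 hV2.toLp) (𝓕 hF.toLp)] with x h1 h2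
      rw [h2, Pi.sub_apply, h1, sub_eq_add_neg]
      refine le_trans (le_of_eq ?_) (Complex.abs_re_le_norm _)
      rw [Complex.add_re, Complex.ofReal_re, Real.norm_eq_abs]
    refine e1.trans ?_
    rw [eLpNorm_fourier]
    have e2 : eLpNorm (hV2.toLp - hF.toLp : Lp ℂ 2 (volume : Measure (EE d))) 2 volume =
        eLpNorm (fun ξ : EE d => (mm t ξ : ℂ) * w ξ - (mm t ξ : ℂ) * gT N w (tor N ξ)) 2 volume := by
      apply eLpNorm_congr_ae
      filter_upwards [Lp.coeFn_sub hV2.toLp hF.toLp, hV2.coeFn_toLp, hF.coeFn_toLp] with ξ h1 h2 h3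
      rw [h1, Pi.sub_apply, h2, h3, hw_def]
      have : mm T ξ = mm t ξ * mm τ ξ := by rw [← mm_add, ht_def, sub_add_cancel]
      rw [this]
      push_cast
      ring
    rw [e2]
    refine (diff_bound hNpos ht hwm hε.1 hk1 hk2).trans ?_
    gcongr
  unfold l2norm
  have := ENNReal.toReal_mono (ENNReal.mul_ne_top ENNReal.ofReal_ne_top hy.2.ne) hfin
  rwa [ENNReal.toReal_mul, ENNReal.toReal_ofReal hε.1.le] at this
end
end

section
/- Let N > 0. Then: (a) the family (N^{d/2} f_{N,n})_{n∈ℤ^d} is an orthonormal family in L²(ℝ^d); and (b) for every (a_n)_{n∈ℤ^d} ∈ ℓ²(ℤ^d), the family (a_n · f_{N,n})_{n∈ℤ^d} is summable in L²(ℝ^d) and ‖ Σ_{n∈ℤ^d} a_n f_{N,n} ‖ = N^{−d/2} ( Σ_{n∈ℤ^d} |a_n|² )^{1/2}. -/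
open MeasureTheory Filter Topology Metric ENNReal NNReal

noncomputable section

def ss (t : ℝ) : ℝ := sinc' (Real.pi * t)

lemma ss_eq (t : ℝ) : ss t = Real.sinc (Real.pi * t) := by
  simp [ss, sinc', Real.sinc]

lemma continuous_ss : Continuous ss := by
  have : ss = fun t => Real.sinc (Real.pi * t) := funext ss_eq
  rw [this]
  exact Real.continuous_sinc.comp (by fun_prop)

lemma ss_int (k : ℤ) : ss k = if k = 0 then 1 else 0 := by
  unfold ss sinc'
  by_cases hk : k = 0
  · simp [hk]
  · have : Real.pi * (k:ℝ) ≠ 0 := mul_ne_zero Real.pi_ne_zero (by exact_mod_cast hk)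
    rw [if_neg this, if_neg hk, mul_comm, Real.sin_int_mul_pi]; simp

lemma int_exp (t : ℝ) :
    ∫ x in (-1/2 : ℝ)..(1/2 : ℝ), Complex.exp (2 * Real.pi * Complex.I * t * x) = (ss t : ℂ) := by
  by_cases ht : t = 0
  · subst ht
    norm_num [ss, sinc']
  · have hpi : (Real.pi : ℂ) ≠ 0 := by exact_mod_cast Real.pi_ne_zero
    have htc : (t : ℂ) ≠ 0 := by exact_mod_cast ht
    have hc : (2 * Real.pi * Complex.I * t : ℂ) ≠ 0 := by
      simp [hpi, htc, Complex.I_ne_zero]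
    rw [integral_exp_mul_complex hc]
    unfold ss sinc'
    rw [if_neg (mul_ne_zero Real.pi_ne_zero ht)]
    push_cast
    rw [Complex.sin]
    have e1 : (2 * Real.pi * Complex.I * t * (1 / 2) : ℂ) = Real.pi * t * Complex.I := by ring
    have e2 : (2 * Real.pi * Complex.I * t * (-1 / 2) : ℂ) = -(Real.pi * t) * Complex.I := by ring
    rw [e1, e2]
    field_simp
    rw [Complex.I_sq]
    ring

lemma parseval (y : ℝ) (k : ℤ) :
    HasSum (fun j : ℤ => (ss (y - j) + ss (y + k - j)) ^ 2) (2 + 2 * if k = 0 then 1 else 0) := by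
  have hab : (-1/2 : ℝ) < 1/2 := by norm_num
  let e : ℝ → ℝ → ℂ := fun t x => Complex.exp (2 * Real.pi * Complex.I * t * x)
  have hec : ∀ t, Continuous (e t) := fun t => by simp only [e]; fun_prop
  have hei : ∀ t, IntervalIntegrable (e t) volume (-1/2) (1/2) :=
    fun t => (hec t).intervalIntegrable _ _
  let f : ℝ → ℂ := fun x => e y x + e (y + k) x
  have hf : Continuous f := (hec _).add (hec _)
  have hL2 : MemLp f 2 (volume.restrict (Set.Ioc (-1/2 : ℝ) (1/2))) := by
    refine MemLp.of_bound hf.aestronglyMeasurable 2 (Eventually.of_forall fun x => ?_)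
    refine (norm_add_le _ _).trans ?_
    have : ∀ t, ‖e t x‖ = 1 := fun t => by
      have : e t x = Complex.exp ((2 * Real.pi * t * x : ℝ) * Complex.I) := by
        simp only [e]; push_cast; congr 1; ring
      rw [this, Complex.norm_exp_ofReal_mul_I]
    rw [this, this]; norm_num
  have h := hasSum_sq_fourierCoeffOn hab hL2
  have hsum : ∀ s t x, e s x * e t x = e (s + t) x := by
    intro s t x
    simp only [e]
    rw [← Complex.exp_add]; push_cast; congr 1; ring
  have hconj : ∀ t x, (starRingEnd ℂ) (e t x) = e (-t) x := by
    intro t x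
    simp only [e]
    rw [← Complex.exp_conj]; simp [Complex.conj_ofNat]
  have h0 : ∀ x, e 0 x = 1 := by intro x; simp [e]
  convert! h using 1
  · funext j
    rw [fourierCoeffOn_eq_integral]
    have : ∀ x : ℝ, (fourier (-j) (x : AddCircle ((1/2 : ℝ) - (-1/2)))) • f x
        = e (y - j) x + e (y + k - j) x := by
      intro x
      rw [fourier_coe_apply]
      have : Complex.exp (2 * Real.pi * Complex.I * (-j : ℤ) * x / ((1/2 - (-1/2) : ℝ) : ℂ))
        = e (-j) x := by
        simp only [e]; congr 1; push_cast; ring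
      rw [this, smul_eq_mul, mul_add, hsum, hsum]
      congr 2 <;> ring
    simp_rw [this]
    rw [intervalIntegral.integral_add (hei _) (hei _), int_exp, int_exp, ← Complex.ofReal_add]
    rw [norm_smul, Complex.norm_real, mul_pow, Real.norm_eq_abs, Real.norm_eq_abs, sq_abs, sq_abs]
    norm_num
  · have : ∀ x, ((‖f x‖ ^ 2 : ℝ) : ℂ) = (2 + e k x) + e (-k) x := by
      intro x
      have := Complex.mul_conj' (f x)
      push_cast
      rw [← this]
      simp only [f, map_add, hconj, add_mul, mul_add, hsum]
      have a1 : y + -y = 0 := by ring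
      have a2 : y + -(y + k) = -k := by ring
      have a3 : y + k + -y = k := by ring
      have a4 : y + k + -(y+k) = 0 := by ring
      rw [a1, a2, a3, a4, h0]; ring
    have hi2 : ∀ t, IntervalIntegrable (fun x => 2 + e t x) volume (-1/2) (1/2) :=
      fun t => (continuous_const.add (hec _)).intervalIntegrable _ _
    apply Complex.ofReal_injective
    rw [smul_eq_mul, Complex.ofReal_mul, ← intervalIntegral.integral_ofReal]
    simp_rw [this]
    rw [intervalIntegral.integral_add (hi2 _) (hei _),
      intervalIntegral.integral_add (continuous_const.intervalIntegrable _ _) (hei _), int_exp, int_exp]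
    have := ss_int (-k)
    push_cast at this
    rw [this, ss_int]
    by_cases hk : k = 0 <;> norm_num [hk]

lemma lint (k : ℤ) : ∫⁻ y, ENNReal.ofReal ((ss y + ss (y + k)) ^ 2)
    = ENNReal.ofReal (2 + 2 * if k = 0 then 1 else 0) := by
  have hm : Measurable fun y => ENNReal.ofReal ((ss y + ss (y + k)) ^ 2) := by
    have := continuous_ss
    fun_prop
  rw [← setLIntegral_univ, ← iUnion_Ico_add_intCast (0:ℝ),
    lintegral_iUnion (fun _ => measurableSet_Ico) (Set.pairwise_disjoint_Ico_add_intCast (0:ℝ))]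
  have : ∀ j : ℤ, ∫⁻ y in Set.Ico ((0:ℝ) + j) (0 + j + 1), ENNReal.ofReal ((ss y + ss (y + k)) ^ 2)
     = ∫⁻ y in Set.Ico (0:ℝ) 1, ENNReal.ofReal ((ss (y + j) + ss (y + k + j)) ^ 2) := by
    intro j
    rw [← (measurePreserving_add_right volume (j:ℝ)).setLIntegral_comp_preimage measurableSet_Ico hm]
    have : (fun x : ℝ => x + j) ⁻¹' Set.Ico ((0:ℝ) + j) (0 + j + 1) = Set.Ico 0 1 := by
      ext x
      simp only [Set.mem_preimage, Set.mem_Ico]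
      constructor <;> rintro ⟨h1, h2⟩ <;> constructor <;> linarith
    rw [this]
    simp_rw [add_right_comm]
  simp_rw [this]
  rw [← lintegral_tsum (fun j => by have := continuous_ss; fun_prop)]
  have : ∀ y, ∑' j : ℤ, ENNReal.ofReal ((ss (y + j) + ss (y + k + j)) ^ 2)
     = ENNReal.ofReal (2 + 2 * if k = 0 then 1 else 0) := by
    intro y
    rw [← (parseval y k).tsum_eq, ENNReal.ofReal_tsum_of_nonneg (fun _ => sq_nonneg _)
      (parseval y k).summable, ← (Equiv.neg ℤ).tsum_eq]
    simp [sub_eq_add_neg]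
  simp_rw [this]
  simp

lemma integrable_sq_add (k : ℤ) : Integrable (fun y => (ss y + ss (y + k)) ^ 2) := by
  have := continuous_ss
  refine ⟨by fun_prop, ?_⟩
  rw [hasFiniteIntegral_iff_ofReal (Eventually.of_forall fun _ => sq_nonneg _), lint]
  exact ENNReal.ofReal_lt_top

lemma integral_sq_add (k : ℤ) : ∫ y, (ss y + ss (y + k)) ^ 2 = 2 + 2 * if k = 0 then 1 else 0 := by
  have := continuous_ss
  rw [integral_eq_lintegral_of_nonneg_ae (Eventually.of_forall fun _ => sq_nonneg _) (by fun_prop),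
    lint, ENNReal.toReal_ofReal]
  split_ifs <;> norm_num

lemma integrable_sq : Integrable (fun y => ss y ^ 2) := by
  have := (integrable_sq_add 0).const_mul (1/4)
  refine this.congr (Eventually.of_forall fun y => ?_)
  simp; ring

lemma integral_sq : ∫ y, ss y ^ 2 = 1 := by
  have h := integral_sq_add 0
  have : (fun y => (ss y + ss (y + (0:ℤ))) ^ 2) = fun y => 4 * ss y ^ 2 := by
    funext y; simp; ring
  rw [this, integral_const_mul] at h
  norm_num at h
  linarith

lemma mul_aux (k : ℤ) : Integrable (fun y => ss y * ss (y + k)) ∧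
    ∫ y, ss y * ss (y + k) = if k = 0 then 1 else 0 := by
  have e : (fun y => ss y * ss (y + k)) =
      fun y => (1/2) * (((ss y + ss (y + k)) ^ 2 - ss y ^ 2) - ss (y + k) ^ 2) := by
    funext y; ring
  have h2 : Integrable (fun y => ss (y + k) ^ 2) := integrable_sq.comp_add_right (k:ℝ)
  have h1 : Integrable (fun y => (ss y + ss (y + k)) ^ 2 - ss y ^ 2) :=
    (integrable_sq_add k).sub integrable_sq
  rw [e]
  refine ⟨(h1.sub h2).const_mul _, ?_⟩
  rw [integral_const_mul, integral_sub h1 h2, integral_sub (integrable_sq_add k) integrable_sq,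
    integral_sq_add, integral_add_right_eq_self (fun y => ss y ^ 2), integral_sq]
  ring

lemma mul_scaled (N : ℝ) (hN : 0 < N) (n m : ℤ) :
    Integrable (fun x => ss (N * x - n) * ss (N * x - m)) ∧
    ∫ x, ss (N * x - n) * ss (N * x - m) = if n = m then N⁻¹ else 0 := by
  have h := mul_aux (n - m)
  have e : (fun x => ss (N * x - n) * ss (N * x - m)) =
      fun x => (fun z => (fun y => ss y * ss (y + (n - m : ℤ))) (z - n)) (N * x) := by
    funext x; push_cast; congr 2; ring
  rw [e]
  refine ⟨(h.1.comp_sub_right (n:ℝ)).comp_mul_left' hN.ne', ?_⟩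
  rw [Measure.integral_comp_mul_left (fun z => (fun y => ss y * ss (y + (n - m : ℤ))) (z - n)) N,
    integral_sub_right_eq_self (fun y => ss y * ss (y + (n - m : ℤ))), h.2]
  simp only [sub_eq_zero]
  split_ifs <;> simp [abs_of_pos hN]

lemma fN_mul (d : ℕ) (N : ℝ) (hN : 0 < N) (n m : Fin d → ℤ) :
    Integrable (fun x => fN d N n x * fN d N m x) ∧
    ∫ x, fN d N n x * fN d N m x = if n = m then (N⁻¹) ^ d else 0 := by
  have e : ∀ x : Fin d → ℝ, fN d N n (WithLp.toLp 2 x) * fN d N m (WithLp.toLp 2 x)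
      = ∏ j, (fun y => ss (N * y - n j) * ss (N * y - m j)) (x j) := by
    intro x
    simp only [fN, Finset.prod_mul_distrib]
    rfl
  constructor
  · rw [← (PiLp.volume_preserving_toLp (Fin d)).integrable_comp_emb
      (MeasurableEquiv.toLp 2 _).measurableEmbedding]
    simp only [Function.comp_def, e]
    exact Integrable.fintype_prod (f := fun j y => ss (N * y - n j) * ss (N * y - m j))
      (fun j => (mul_scaled N hN (n j) (m j)).1)
  · rw [← (PiLp.volume_preserving_toLp (Fin d)).integral_comp
      (MeasurableEquiv.toLp 2 _).measurableEmbedding]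
    simp only [e]
    rw [integral_fintype_prod_volume_eq_prod
      (f := fun j y => ss (N * y - n j) * ss (N * y - m j))]
    simp_rw [(mul_scaled N hN _ _).2]
    by_cases h : n = m
    · simp [h]
    · rw [if_neg h]
      obtain ⟨j, hj⟩ := Function.ne_iff.mp h
      exact Finset.prod_eq_zero (Finset.mem_univ j) (if_neg hj)

lemma fN_memLp (d : ℕ) (N : ℝ) (hN : 0 < N) (n : Fin d → ℤ) : MemLp (fN d N n) 2 volume := by
  have hc : Continuous (fN d N n) := by
    have := continuous_ss
    have e : fN d N n = fun x => ∏ j, ss (N * x j - n j) := rfl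
    rw [e]
    fun_prop
  rw [memLp_two_iff_integrable_sq hc.aestronglyMeasurable]
  simpa [sq] using (fN_mul d N hN n n).1

lemma c_sq (d : ℕ) (N : ℝ) (hN : 0 < N) :
    N ^ ((d : ℝ) / 2) * N ^ ((d : ℝ) / 2) * (N⁻¹) ^ d = 1 := by
  rw [← Real.rpow_add hN, add_halves, Real.rpow_natCast, ← mul_pow, mul_inv_cancel₀ hN.ne', one_pow]

lemma hilb {E ι : Type*} [NormedAddCommGroup E] [InnerProductSpace ℝ E] [CompleteSpace E]
    {v : ι → E} (hv : Orthonormal ℝ v) (b : ι → ℝ) (hb : Summable fun n => b n ^ 2) :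
    ∃ S : E, HasSum (fun n => b n • v n) S ∧ ‖S‖ ^ 2 = ∑' n, b n ^ 2 := by
  have hV := hv.orthogonalFamily
  have hb' : Summable fun n => ‖b n‖ ^ 2 := by simpa using hb
  have hsum := (hV.summable_iff_norm_sq_summable b).2 hb'
  obtain ⟨S, hS⟩ := hsum
  refine ⟨S, by simpa using hS, ?_⟩
  have h1 : Tendsto (fun s : Finset ι => ∑ n ∈ s, b n ^ 2) atTop (𝓝 (‖S‖ ^ 2)) := by
    have := (Filter.Tendsto.norm hS).pow 2
    refine this.congr fun s => ?_
    rw [hV.norm_sum b s]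
    simp
  exact tendsto_nhds_unique h1 hb.hasSum

lemma main_b (d : ℕ) (N : ℝ) (hN : 0 < N) (a : (Fin d → ℤ) → ℝ)
    (ha : Summable (fun n => (a n) ^ 2)) :
      ∃ S : EuclideanSpace ℝ (Fin d) → ℝ, MemLp S 2 volume ∧
        HasSumL2 d (fun n x => a n * fN d N n x) S ∧
        l2norm d S = N ^ (-(d : ℝ) / 2) * Real.sqrt (∑' n, (a n) ^ 2) := by
  set c : ℝ := N ^ ((d : ℝ) / 2) with hc
  have hcpos : 0 < c := Real.rpow_pos_of_pos hN _
  let v : (Fin d → ℤ) → Lp ℝ 2 (volume : Measure (EuclideanSpace ℝ (Fin d))) :=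
    fun n => c • (fN_memLp d N hN n).toLp (fN d N n)
  have hv : Orthonormal ℝ v := by
    rw [orthonormal_iff_ite]
    intro n m
    simp only [v, inner_smul_left, inner_smul_right]
    rw [L2.inner_def]
    have : ∫ x, inner ℝ ((fN_memLp d N hN n).toLp (fN d N n) x)
        ((fN_memLp d N hN m).toLp (fN d N m) x) = ∫ x, fN d N n x * fN d N m x := by
      apply integral_congr_ae
      filter_upwards [(fN_memLp d N hN n).coeFn_toLp, (fN_memLp d N hN m).coeFn_toLp] with x h1 h2
      rw [h1, h2]; simp [mul_comm]
    rw [this, (fN_mul d N hN n m).2]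
    have := c_sq d N hN
    split_ifs
    · simp only [conj_trivial]; rw [← this]; ring
    · simp
  have hb : Summable fun n => (c⁻¹ * a n) ^ 2 := by
    simp_rw [mul_pow]
    exact ha.mul_left ((c⁻¹) ^ 2)
  obtain ⟨S, hS, hnorm⟩ := hilb hv (fun n => c⁻¹ * a n) hb
  have hterm : ∀ n, (c⁻¹ * a n) • v n
      = a n • (fN_memLp d N hN n).toLp (fN d N n) := by
    intro n
    simp only [v, smul_smul]
    congr 1
    field_simp
  refine ⟨S, Lp.memLp S, ?_, ?_⟩
  · unfold HasSumL2
    have h2 : Tendsto (fun s : Finset (Fin d → ℤ) =>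
        eLpNorm (⇑S - ⇑(∑ n ∈ s, a n • (fN_memLp d N hN n).toLp (fN d N n))) 2 volume)
        atTop (𝓝 0) := by
      have h3 : Tendsto (fun s : Finset (Fin d → ℤ) =>
        (∑ n ∈ s, a n • (fN_memLp d N hN n).toLp (fN d N n))) atTop (𝓝 S) := by
        simp_rw [← hterm]; exact hS
      have h4 := tendsto_iff_edist_tendsto_0.1 h3
      refine h4.congr fun s => ?_
      rw [edist_comm, Lp.edist_def]
    refine h2.congr fun s => ?_
    apply eLpNorm_congr_ae
    have h5 := Lp.coeFn_finsetSum s (fun n => a n • (fN_memLp d N hN n).toLp (fN d N n))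
    have h6 : ∀ᵐ x, ∀ n : Fin d → ℤ, (a n • (fN_memLp d N hN n).toLp (fN d N n)) x
        = a n * fN d N n x := by
      rw [ae_all_iff]
      intro n
      filter_upwards [Lp.coeFn_smul (a n) ((fN_memLp d N hN n).toLp (fN d N n)),
        (fN_memLp d N hN n).coeFn_toLp] with x h1 h2
      rw [h1, Pi.smul_apply, h2, smul_eq_mul]
    filter_upwards [h5, h6] with x h7 h8
    rw [Pi.sub_apply, h7, Finset.sum_apply]
    simp_rw [h8]
  · have : l2norm d S = ‖S‖ := by rw [l2norm, Lp.norm_def]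
    rw [this]
    have h9 : ‖S‖ ^ 2 = (c⁻¹) ^ 2 * ∑' n, (a n) ^ 2 := by
      rw [hnorm]
      simp_rw [mul_pow]
      exact (ha.hasSum.mul_left ((c⁻¹) ^ 2)).tsum_eq
    rw [← Real.sqrt_sq (norm_nonneg S), h9, Real.sqrt_mul (sq_nonneg _),
      Real.sqrt_sq (inv_nonneg.2 hcpos.le), hc, neg_div, Real.rpow_neg hN.le]

/-- Properties of the family `(f_{N,n})_{n ∈ ℤ^d}`: (a) `(N^{d/2} f_{N,n})_{n ∈ ℤ^d}` is an
orthonormal family in `L²(ℝ^d)`; (b) for every `(a_n) ∈ ℓ²(ℤ^d)` the family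
`(a_n f_{N,n})_{n ∈ ℤ^d}` is summable in `L²(ℝ^d)` and
`‖Σ_n a_n f_{N,n}‖ = N^{-d/2} (Σ_n |a_n|²)^{1/2}`. -/
theorem statement19 (d : ℕ) (hd : 0 < d) (N : ℝ) (hN : 0 < N) :
    ((∀ n : Fin d → ℤ, MemLp (fN d N n) 2 volume) ∧
      ∀ n m : Fin d → ℤ,
        ∫ x, (N ^ ((d : ℝ) / 2) * fN d N n x) * (N ^ ((d : ℝ) / 2) * fN d N m x) =
          if n = m then 1 else 0) ∧
    ∀ a : (Fin d → ℤ) → ℝ, Summable (fun n => (a n) ^ 2) →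
      ∃ S : EuclideanSpace ℝ (Fin d) → ℝ, MemLp S 2 volume ∧
        HasSumL2 d (fun n x => a n * fN d N n x) S ∧
        l2norm d S = N ^ (-(d : ℝ) / 2) * Real.sqrt (∑' n, (a n) ^ 2) := by
  refine ⟨⟨fN_memLp d N hN, fun n m => ?_⟩, main_b d N hN⟩
  have e : ∀ x, (N ^ ((d : ℝ) / 2) * fN d N n x) * (N ^ ((d : ℝ) / 2) * fN d N m x)
    = (N ^ ((d : ℝ) / 2) * N ^ ((d : ℝ) / 2)) * (fN d N n x * fN d N m x) := fun x => by ring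
  simp_rw [e]
  rw [integral_const_mul, (fN_mul d N hN n m).2]
  split_ifs
  · exact c_sq d N hN
  · simp
end
end
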